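/- (Proposition 2, upper boundary.) Let R₊ > 0, R₋ > 0, c > 0, β ≥ 0 and b ∈ ℝ. The function g : ℝ → ℝ defined by g(u) = R₊·exp(b + 1 − u) + c·R₋·exp(u − b − 1) − β·u attains its unique global minimum at u* = b + 1 + log((β + √(β² + 4·c·R₊·R₋)) / (2·c·R₋)), and the argument of the logarithm is strictly positive. -/

import Mathlib

/-- Proposition 2 (upper boundary) from "Box Drawings for Learning with
Imbalanced Data": the regularized exponential loss
`g u = R₊·exp(b + 1 − u) + c·R₋·exp(u − b − 1) − β·u` attains its unique
global minimum at `u* = b + 1 + log((β + √(β² + 4cR₊R₋)) / (2cR₋))`, the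
argument of the logarithm being strictly positive. -/
theorem stmt_2 (Rp Rm c β b : ℝ) (hRp : 0 < Rp) (hRm : 0 < Rm) (hc : 0 < c)
    (hβ : 0 ≤ β)
    (g : ℝ → ℝ)
    (hg : ∀ u, g u = Rp * Real.exp (b + 1 - u) + c * Rm * Real.exp (u - b - 1) - β * u)
    (ustar : ℝ)
    (hu : ustar = b + 1 +
      Real.log ((β + Real.sqrt (β ^ 2 + 4 * c * Rp * Rm)) / (2 * c * Rm))) :
    0 < (β + Real.sqrt (β ^ 2 + 4 * c * Rp * Rm)) / (2 * c * Rm) ∧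
    (∀ u, g ustar ≤ g u) ∧
    (∀ u, u ≠ ustar → g ustar < g u) := by
  have hD : 0 < β ^ 2 + 4 * c * Rp * Rm := by positivity
  have hsq := Real.sq_sqrt hD.le
  have hs : 0 < Real.sqrt (β ^ 2 + 4 * c * Rp * Rm) := Real.sqrt_pos.mpr hD
  have hx : 0 < (β + Real.sqrt (β ^ 2 + 4 * c * Rp * Rm)) / (2 * c * Rm) := by positivity
  have hq : c * Rm * ((β + Real.sqrt (β ^ 2 + 4 * c * Rp * Rm)) / (2 * c * Rm)) ^ 2
      = Rp + β * ((β + Real.sqrt (β ^ 2 + 4 * c * Rp * Rm)) / (2 * c * Rm)) := by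
    generalize Real.sqrt (β ^ 2 + 4 * c * Rp * Rm) = s at *
    field_simp
    linear_combination hsq
  generalize (β + Real.sqrt (β ^ 2 + 4 * c * Rp * Rm)) / (2 * c * Rm) = x at *
  have key : ∀ u, u ≠ ustar → g ustar < g u := by
    intro u hne
    have ht : u - ustar ≠ 0 := sub_ne_zero.mpr hne
    have h1 := Real.add_one_lt_exp ht
    have h2 := Real.add_one_lt_exp (neg_ne_zero.mpr ht)
    have e1 : Real.exp (b + 1 - ustar) = x⁻¹ := by
      rw [hu, show b + 1 - (b + 1 + Real.log x) = -Real.log x by ring, Real.exp_neg,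
        Real.exp_log hx]
    have e2 : Real.exp (ustar - b - 1) = x := by
      rw [hu, show b + 1 + Real.log x - b - 1 = Real.log x by ring, Real.exp_log hx]
    have e3 : Real.exp (b + 1 - u) = x⁻¹ * Real.exp (-(u - ustar)) := by
      rw [← e1, ← Real.exp_add]; congr 1; ring
    have e4 : Real.exp (u - b - 1) = x * Real.exp (u - ustar) := by
      rw [← e2]
      rw [← Real.exp_add]; congr 1; ring
    have hb : β = c * Rm * x - Rp * x⁻¹ := by
      field_simp
      linear_combination -hq
    rw [hg, hg, e1, e2, e3, e4]
    have hA : 0 < c * Rm * x := by positivity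
    have hB : 0 < Rp * x⁻¹ := by positivity
    have p1 := mul_pos hA (sub_pos.mpr h1)
    have p2 := mul_pos hB (sub_pos.mpr h2)
    rw [hb]
    linarith
  refine ⟨hx, fun u => ?_, key⟩
  by_cases h : u = ustar
  · rw [h]
  · exact (key u h).le
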